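/- For a positive integer b, the quadratic form f^{1,b}_1(x,y,z,w) = x² + b·y² + (z² + z·w + w²) represents every nonnegative integer (with x, y, z, w ∈ ℤ) if and only if b ∈ {1, 2, 3, 4, 5, 6}. -/

import Mathlib

/-!
Let `T = x² + y² + yz + z²`. It misses every number congruent to `6` modulo `9`, in particular `6`,
so a universal form `x² + b y² + (z² + zw + w²)` has to use the term `b y²` to represent `6`, which
forces `b ≤ 6`.

Conversely, `T` represents every `n ≥ 0` that is prime to `3` or congruent to `3` modulo `9`. For
`b ≤ 6`, subtracting `b y²` with `y ∈ {0, 1, 2}` or dividing by `3` or `9` brings any `n` to one of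
these cases, up to a few small values.

The facts on `T` follow the pattern of Dirichlet's proof of the three-square theorem. By reduction
theory, every positive definite integral ternary form of half-discriminant `3` is equivalent to `T`.
If `-d` is a square modulo `p`, say `pβ - u² = d`, then `p x² + 2u xy + β y² + r yz + n z²` has
half-discriminant `4nd - pr²` and represents `n`. Dirichlet's theorem on primes in arithmetic
progressions supplies a prime `p` with `4nd = pr² + 3` and `d ≡ 1 (mod 6)`, where `r` is `1` or `3`,
and quadratic reciprocity gives `(-d/p) = (d/p) = (p/d) = (pr²/d) = (-3/d) = 1`.
-/

theorem exists_two_mul_abs_add_mul_le (t : ℤ) {m : ℤ} (hm : 0 < m) :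
    ∃ k : ℤ, 2 * |t + m * k| ≤ m := by
  refine ⟨-((2 * t + m) / (2 * m)), ?_⟩
  have hdiv := Int.emod_add_mul_ediv (2 * t + m) (2 * m)
  have hnonneg := Int.emod_nonneg (2 * t + m) (b := 2 * m) (by lia)
  have hlt := Int.emod_lt_of_pos (2 * t + m) (b := 2 * m) (by lia)
  have habs : |2 * (t + m * -((2 * t + m) / (2 * m)))| ≤ m := abs_le.mpr ⟨by linarith, by linarith⟩
  simpa only [abs_mul, Nat.abs_ofNat] using habs

theorem coprime_of_dvd_add {a d k : ℕ} (hd : d.Coprime k) (h : d ∣ a + k) : a.Coprime d := by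
  have hgcd : a.gcd d ∣ k :=
    (Nat.dvd_add_right (a.gcd_dvd_left d)).mp ((a.gcd_dvd_right d).trans h)
  exact Nat.eq_one_of_dvd_coprimes hd (a.gcd_dvd_right d) hgcd

theorem exists_prime_eq_add_mul {a q : ℕ} (hq : q ≠ 0) (h : a.Coprime q) :
    ∃ p k : ℕ, p.Prime ∧ p = a + q * k := by
  obtain ⟨p, hlt, hp, hmod⟩ := Nat.forall_exists_prime_gt_and_modEq a hq h
  obtain ⟨k, hk⟩ := (Nat.modEq_iff_dvd' hlt.le).mp hmod.symm
  exact ⟨p, k, hp, by lia⟩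

/-- The integral ternary quadratic form `a x² + b y² + c z² + r yz + s xz + t xy`. The cross terms
are not required to be even. -/
structure TernaryForm where
  (a b c r s t : ℤ)

namespace TernaryForm

variable {F G : TernaryForm}

/-- The value of a ternary form at an integral vector. -/
def eval (F : TernaryForm) (x y z : ℤ) : ℤ :=
  F.a * x ^ 2 + F.b * y ^ 2 + F.c * z ^ 2 + F.r * y * z + F.s * x * z + F.t * x * y

/-- The set of integers represented by a ternary form. -/
def values (F : TernaryForm) : Set ℤ := {n | ∃ x y z, F.eval x y z = n}

/-- Half the determinant of the Hessian matrix of a ternary form, which is an integer. -/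
def halfDisc (F : TernaryForm) : ℤ :=
  4 * F.a * F.b * F.c + F.r * F.s * F.t - F.a * F.r ^ 2 - F.b * F.s ^ 2 - F.c * F.t ^ 2

/-- The coefficient `A` in `4aF = (2ax + ty + sz)² + (A y² + 2B yz + C z²)`; it is also the leading
principal `2 × 2` minor of the Hessian matrix. -/
def minorXY (F : TernaryForm) : ℤ := 4 * F.a * F.b - F.t ^ 2

/-- The coefficient `C` in `4aF = (2ax + ty + sz)² + (A y² + 2B yz + C z²)`. -/
def minorXZ (F : TernaryForm) : ℤ := 4 * F.a * F.c - F.s ^ 2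

/-- The coefficient `B` in `4aF = (2ax + ty + sz)² + (A y² + 2B yz + C z²)`. -/
def minorMixed (F : TernaryForm) : ℤ := 2 * F.a * F.r - F.s * F.t

/-- Positive definiteness of a ternary form, encoded by Sylvester's criterion. -/
structure PosDef (F : TernaryForm) : Prop where
  a_pos : 0 < F.a
  minorXY_pos : 0 < F.minorXY
  halfDisc_pos : 0 < F.halfDisc

theorem minorXY_mul_minorXZ (F : TernaryForm) :
    F.minorXY * F.minorXZ = F.minorMixed ^ 2 + 4 * F.a * F.halfDisc := by
  simp only [minorXY, minorXZ, minorMixed, halfDisc]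
  ring

theorem PosDef.b_pos (hF : F.PosDef) : 0 < F.b := by
  have hab : 0 < 4 * F.a * F.b := lt_of_le_of_lt (sq_nonneg F.t) (sub_pos.mp hF.minorXY_pos)
  exact pos_of_mul_pos_right hab (by linarith [hF.a_pos])

theorem PosDef.minorXZ_pos (hF : F.PosDef) : 0 < F.minorXZ := by
  have ha := hF.a_pos
  have hD := hF.halfDisc_pos
  have hprod : 0 < F.minorXY * F.minorXZ := by
    rw [minorXY_mul_minorXZ]
    positivity
  exact pos_of_mul_pos_right hprod hF.minorXY_pos.le

/-! ### Equivalence -/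

/-- The form obtained by the substitution `x ↦ x + k y`. -/
def shearXY (F : TernaryForm) (k : ℤ) : TernaryForm :=
  ⟨F.a, F.b + F.t * k + F.a * k ^ 2, F.c, F.r + F.s * k, F.s, F.t + 2 * F.a * k⟩

/-- The form obtained by exchanging `x` and `y`. -/
def swapXY (F : TernaryForm) : TernaryForm := ⟨F.b, F.a, F.c, F.s, F.r, F.t⟩

/-- The form obtained by exchanging `y` and `z`. -/
def swapYZ (F : TernaryForm) : TernaryForm := ⟨F.a, F.c, F.b, F.r, F.t, F.s⟩

/-- The form obtained by the substitution `x ↦ x + k z`. -/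
def shearXZ (F : TernaryForm) (k : ℤ) : TernaryForm := (F.swapYZ.shearXY k).swapYZ

/-- The form obtained by the substitution `y ↦ y + k z`. -/
def shearYZ (F : TernaryForm) (k : ℤ) : TernaryForm := (F.swapXY.shearXZ k).swapXY

/-- Equivalence of ternary forms under `GL₃(ℤ)`, presented through substitutions that generate this
group. -/
inductive Equivalent (F : TernaryForm) : TernaryForm → Prop
  | refl : Equivalent F F
  | shearXY {G : TernaryForm} (k : ℤ) : Equivalent F G → Equivalent F (G.shearXY k)
  | swapXY {G : TernaryForm} : Equivalent F G → Equivalent F G.swapXY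
  | swapYZ {G : TernaryForm} : Equivalent F G → Equivalent F G.swapYZ

namespace Equivalent

theorem shearXZ (h : F.Equivalent G) (k : ℤ) : F.Equivalent (G.shearXZ k) :=
  (h.swapYZ.shearXY k).swapYZ

theorem shearYZ (h : F.Equivalent G) (k : ℤ) : F.Equivalent (G.shearYZ k) :=
  (h.swapXY.shearXZ k).swapXY

theorem trans {H : TernaryForm} (hFG : F.Equivalent G) (hGH : G.Equivalent H) : F.Equivalent H := by
  induction hGH with
  | refl => exact hFG
  | shearXY k _ ih => exact ih.shearXY k
  | swapXY _ ih => exact ih.swapXY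
  | swapYZ _ ih => exact ih.swapYZ

theorem halfDisc_eq (h : F.Equivalent G) : G.halfDisc = F.halfDisc := by
  induction h with
  | refl => rfl
  | shearXY k _ ih | swapXY _ ih | swapYZ _ ih =>
    rw [← ih]
    simp only [halfDisc, TernaryForm.shearXY, TernaryForm.swapXY, TernaryForm.swapYZ]
    ring

theorem values_subset (h : F.Equivalent G) : F.values ⊆ G.values := by
  induction h with
  | refl => exact subset_rfl
  | shearXY k _ ih =>
    refine ih.trans ?_
    rintro _ ⟨x, y, z, rfl⟩
    exact ⟨x - k * y, y, z, by simp only [eval, TernaryForm.shearXY]; ring⟩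
  | swapXY _ ih =>
    refine ih.trans ?_
    rintro _ ⟨x, y, z, rfl⟩
    exact ⟨y, x, z, by simp only [eval, TernaryForm.swapXY]; ring⟩
  | swapYZ _ ih =>
    refine ih.trans ?_
    rintro _ ⟨x, y, z, rfl⟩
    exact ⟨x, z, y, by simp only [eval, TernaryForm.swapYZ]; ring⟩

theorem posDef (h : F.Equivalent G) (hF : F.PosDef) : G.PosDef := by
  induction h with
  | refl => exact hF
  | @shearXY G k hG ih =>
    refine ⟨ih.a_pos, ?_, (hG.shearXY k).halfDisc_eq ▸ hF.halfDisc_pos⟩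
    have hminor : (G.shearXY k).minorXY = G.minorXY := by
      simp only [minorXY, TernaryForm.shearXY]
      ring
    exact hminor ▸ ih.minorXY_pos
  | @swapXY G hG ih =>
    refine ⟨ih.b_pos, ?_, hG.swapXY.halfDisc_eq ▸ hF.halfDisc_pos⟩
    have hminor : G.swapXY.minorXY = G.minorXY := by
      simp only [minorXY, TernaryForm.swapXY]
      ring
    exact hminor ▸ ih.minorXY_pos
  | swapYZ hG ih => exact ⟨ih.a_pos, ih.minorXZ_pos, hG.swapYZ.halfDisc_eq ▸ hF.halfDisc_pos⟩

end Equivalent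

/-! ### Reduction -/

/-- A ternary form whose off-diagonal entries `t`, `s` and `B`, the last one belonging to the binary
part `A y² + 2B yz + C z²` of `4aF`, cannot be made smaller by a shear. -/
structure SizeReduced (F : TernaryForm) : Prop where
  abs_t_le : |F.t| ≤ F.a
  abs_s_le : |F.s| ≤ F.a
  two_mul_abs_minorMixed_le : 2 * |F.minorMixed| ≤ F.minorXY

/-- A size-reduced ternary form for which neither exchanging `x` and `y` lowers `a` nor exchanging
`y` and `z` lowers `A`. -/
structure Reduced (F : TernaryForm) : Prop extends SizeReduced F where
  a_le_b : F.a ≤ F.b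
  minorXY_le_minorXZ : F.minorXY ≤ F.minorXZ

theorem PosDef.exists_equivalent_sizeReduced (hF : F.PosDef) :
    ∃ G, F.Equivalent G ∧ G.a = F.a ∧ G.minorXY = F.minorXY ∧ G.SizeReduced := by
  obtain ⟨k, hk⟩ := exists_two_mul_abs_add_mul_le F.minorMixed hF.minorXY_pos
  have ha : 0 < 2 * F.a := by linarith [hF.a_pos]
  obtain ⟨l, hl⟩ := exists_two_mul_abs_add_mul_le F.t ha
  obtain ⟨m, hm⟩ := exists_two_mul_abs_add_mul_le (F.s + F.t * k) ha
  let G := ((F.shearYZ k).shearXY l).shearXZ m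
  have hminor : G.minorXY = F.minorXY := by
    simp only [G, minorXY, shearYZ, shearXZ, shearXY, swapXY, swapYZ]
    ring
  have hmixed : G.minorMixed = F.minorMixed + F.minorXY * k := by
    simp only [G, minorMixed, minorXY, shearYZ, shearXZ, shearXY, swapXY, swapYZ]
    ring
  refine ⟨G, ((Equivalent.refl.shearYZ k).shearXY l).shearXZ m, rfl, hminor, ?_, ?_, ?_⟩
  · exact le_of_mul_le_mul_left hl two_pos
  · exact le_of_mul_le_mul_left hm two_pos
  · rwa [hmixed, hminor]

theorem PosDef.exists_equivalent_reduced (hF : F.PosDef) :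
    ∃ G, F.Equivalent G ∧ G.Reduced := by
  induction hN : (F.a + F.minorXY).toNat using Nat.strong_induction_on generalizing F with
  | _ N ih =>
    obtain ⟨G, hFG, ha, hminor, hG⟩ := hF.exists_equivalent_sizeReduced
    have hF_pos : 0 < F.a + F.minorXY := add_pos hF.a_pos hF.minorXY_pos
    by_cases hab : G.a ≤ G.b
    · by_cases hAC : G.minorXY ≤ G.minorXZ
      · exact ⟨G, hFG, hG, hab, hAC⟩
      · have hlt : G.swapYZ.a + G.swapYZ.minorXY < F.a + F.minorXY := by
          change G.a + G.minorXZ < F.a + F.minorXY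
          linarith
        obtain ⟨H, hGH, hH⟩ := ih _ (by lia) (hFG.swapYZ.posDef hF) rfl
        exact ⟨H, hFG.swapYZ.trans hGH, hH⟩
    · have hlt : G.swapXY.a + G.swapXY.minorXY < F.a + F.minorXY := by
        have hswap : G.swapXY.minorXY = G.minorXY := by
          simp only [minorXY, swapXY]
          ring
        change G.b + G.swapXY.minorXY < F.a + F.minorXY
        linarith
      obtain ⟨H, hGH, hH⟩ := ih _ (by lia) (hFG.swapXY.posDef hF) rfl
      exact ⟨H, hFG.swapXY.trans hGH, hH⟩

namespace Reduced

theorem three_mul_a_sq_le (hF : F.Reduced) : 3 * F.a ^ 2 ≤ F.minorXY := by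
  have ha : 0 ≤ F.a := (abs_nonneg _).trans hF.abs_t_le
  have ht : F.t ^ 2 ≤ F.a ^ 2 := sq_le_sq' (abs_le.mp hF.abs_t_le).1 (abs_le.mp hF.abs_t_le).2
  have hab : F.a * F.a ≤ F.a * F.b := mul_le_mul_of_nonneg_left hF.a_le_b ha
  rw [minorXY]
  linarith

theorem three_mul_minorXY_sq_le (hF : F.Reduced) : 3 * F.minorXY ^ 2 ≤ 16 * F.a * F.halfDisc := by
  have hA : 0 ≤ F.minorXY := le_trans (by positivity) hF.two_mul_abs_minorMixed_le
  have hB : (2 * F.minorMixed) ^ 2 ≤ F.minorXY ^ 2 := by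
    refine sq_le_sq.mpr ?_
    rw [abs_mul, abs_two, abs_of_nonneg hA]
    exact hF.two_mul_abs_minorMixed_le
  have hAC : F.minorXY * F.minorXY ≤ F.minorXY * F.minorXZ :=
    mul_le_mul_of_nonneg_left hF.minorXY_le_minorXZ hA
  rw [minorXY_mul_minorXZ] at hAC
  linarith

end Reduced

/-! ### Half-discriminant three -/

/-- The form `x² + y² + yz + z²`, a square plus the norm form of the Eisenstein integers. -/
def sqAddEisenstein : TernaryForm := ⟨1, 1, 1, 1, 0, 0⟩

theorem Reduced.a_eq_one (hF : F.Reduced) (ha : 0 < F.a) (hD : F.halfDisc = 3) : F.a = 1 := by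
  have h3a := hF.three_mul_a_sq_le
  have hA := hF.three_mul_minorXY_sq_le
  rw [hD] at hA
  by_contra hne
  have h2a : 2 ≤ F.a := by lia
  have h6a : 6 * F.a ≤ F.minorXY := by nlinarith
  have h6a_sq : (6 * F.a) ^ 2 ≤ F.minorXY ^ 2 := pow_le_pow_left₀ (by lia) h6a 2
  nlinarith

theorem Reduced.minorXY_le_four (hF : F.Reduced) (ha : 0 < F.a) (hD : F.halfDisc = 3) :
    F.minorXY ≤ 4 := by
  have hA := hF.three_mul_minorXY_sq_le
  rw [hF.a_eq_one ha hD, hD] at hA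
  nlinarith

theorem Reduced.b_eq_one (hF : F.Reduced) (ha : 0 < F.a) (hD : F.halfDisc = 3) : F.b = 1 := by
  have hA := hF.minorXY_le_four ha hD
  have hab := hF.a_le_b
  have ht : F.t ^ 2 ≤ 1 := by
    rw [sq_le_one_iff_abs_le_one]
    exact hF.a_eq_one ha hD ▸ hF.abs_t_le
  rw [minorXY, hF.a_eq_one ha hD] at hA
  lia

theorem Reduced.abs_minorMixed_le_two (hF : F.Reduced) (ha : 0 < F.a) (hD : F.halfDisc = 3) :
    |F.minorMixed| ≤ 2 := by
  linarith [hF.two_mul_abs_minorMixed_le, hF.minorXY_le_four ha hD]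

theorem Reduced.eq_of_halfDisc_eq_three (hF : F.Reduced) (ha : 0 < F.a) (hD : F.halfDisc = 3) :
    F = ⟨1, 1, 1, 1, 0, 0⟩ ∨ F = ⟨1, 1, 1, -1, 0, 0⟩ ∨
      F = ⟨1, 1, 1, 0, 0, 1⟩ ∨ F = ⟨1, 1, 1, 0, 0, -1⟩ := by
  have ha1 := hF.a_eq_one ha hD
  have hb1 := hF.b_eq_one ha hD
  have hAC := hF.minorXY_le_minorXZ
  obtain ⟨hB, hB'⟩ := abs_le.mp (hF.abs_minorMixed_le_two ha hD)
  obtain ⟨hs, hs'⟩ := abs_le.mp hF.abs_s_le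
  obtain ⟨ht, ht'⟩ := abs_le.mp hF.abs_t_le
  obtain ⟨a, b, c, r, s, t⟩ := F
  dsimp only at ha1 hb1
  subst ha1 hb1
  simp only [minorXY, minorXZ, minorMixed, halfDisc, mk.injEq] at *
  obtain ⟨hr, hr'⟩ : -1 ≤ r ∧ r ≤ 1 := by interval_cases s <;> lia
  interval_cases t <;> interval_cases s <;> interval_cases r <;> lia

theorem PosDef.equivalent_sqAddEisenstein (hF : F.PosDef) (hD : F.halfDisc = 3) :
    F.Equivalent sqAddEisenstein := by
  obtain ⟨G, hFG, hG⟩ := hF.exists_equivalent_reduced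
  have hneg : Equivalent ⟨1, 1, 1, -1, 0, 0⟩ sqAddEisenstein := Equivalent.refl.shearYZ 1
  rcases hG.eq_of_halfDisc_eq_three (hFG.posDef hF).a_pos (hFG.halfDisc_eq.trans hD) with
    rfl | rfl | rfl | rfl
  · exact hFG
  · exact hFG.trans hneg
  · exact hFG.swapYZ.swapXY
  · exact hFG.swapYZ.swapXY.trans hneg

theorem exists_posDef_of_isSquare_neg {p : ℕ} {d n r : ℤ} (hp : 0 < p) (hd : 0 < d)
    (hsq : IsSquare ((-d : ℤ) : ZMod p)) (hD : 0 < 4 * n * d - p * r ^ 2) :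
    ∃ F : TernaryForm, F.PosDef ∧ F.halfDisc = 4 * n * d - p * r ^ 2 ∧ n ∈ F.values := by
  obtain ⟨v, hv⟩ := hsq
  obtain ⟨u, rfl⟩ := ZMod.intCast_surjective v
  obtain ⟨β, hβ⟩ : (p : ℤ) ∣ d + u ^ 2 := by
    rw [← ZMod.intCast_zmod_eq_zero_iff_dvd]
    push_cast at hv ⊢
    linear_combination -hv
  let F : TernaryForm := ⟨p, β, n, r, 0, 2 * u⟩
  have hminor : F.minorXY = 4 * d := by
    simp only [F, minorXY]
    linear_combination -4 * hβ
  have hdisc : F.halfDisc = 4 * n * d - p * r ^ 2 := by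
    simp only [F, halfDisc]
    linear_combination -4 * n * hβ
  have hF : F.PosDef := ⟨Int.natCast_pos.mpr hp, by lia, by lia⟩
  exact ⟨F, hF, hdisc, 0, 0, 1, by simp [F, eval]⟩

end TernaryForm

/-! ### Quadratic reciprocity -/

section Reciprocity

open NumberTheorySymbols

theorem jacobiSym_neg_three {d : ℕ} (hd : Odd d) : J(-3 | d) = J(d | 3) := by
  have hmul : J(-3 | d) = J(-1 | d) * J((3 : ℕ) | d) := by
    rw [← jacobiSym.mul_left]
    norm_num
  rw [hmul, jacobiSym.at_neg_one hd]
  have hd4 : d % 4 = 1 ∨ d % 4 = 3 := Nat.odd_mod_four_iff.mp (Nat.odd_iff.mp hd)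
  rcases hd4 with h1 | h3
  · rw [ZMod.χ₄_nat_one_mod_four h1, one_mul,
      jacobiSym.quadratic_reciprocity_one_mod_four' (by decide) h1]
  · rw [ZMod.χ₄_nat_three_mod_four h3,
      jacobiSym.quadratic_reciprocity_three_mod_four (by decide) h3, neg_one_mul, neg_neg]

theorem jacobiSym_neg_three_eq_one {d : ℕ} (hd : d % 6 = 1) : J(-3 | d) = 1 := by
  rw [jacobiSym_neg_three (Nat.odd_iff.mpr (by lia)), jacobiSym.mod_left' (a₂ := 1) (by lia),
    jacobiSym.one_left]

theorem mod_four_eq_one_of_four_mul_eq {p m r : ℕ} (h : 4 * m = p * r ^ 2 + 3) : p % 4 = 1 := by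
  have hr : Odd r := by
    have hpr : Odd (p * r ^ 2) := Nat.odd_iff.mpr (by lia)
    exact (Nat.odd_pow_iff two_ne_zero).mp (Nat.odd_mul.mp hpr).2
  obtain ⟨k, rfl⟩ := hr
  have : p * (2 * k + 1) ^ 2 = 4 * (p * (k ^ 2 + k)) + p := by ring
  lia

theorem isSquare_neg_of_four_mul_eq {p d n r : ℕ} (hp : p.Prime) (hd : d % 6 = 1)
    (h : 4 * n * d = p * r ^ 2 + 3) : IsSquare ((-d : ℤ) : ZMod p) := by
  have : Fact p.Prime := ⟨hp⟩
  have hp4 : p % 4 = 1 := mod_four_eq_one_of_four_mul_eq (by rw [← h, mul_assoc])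
  have hd3 : d.Coprime 3 := by
    rw [Nat.coprime_comm, Nat.prime_three.coprime_iff_not_dvd]
    lia
  have hrd : Int.gcd r d = 1 := by
    have hprd : (p * r ^ 2).Coprime d := coprime_of_dvd_add hd3 ⟨4 * n, by linarith⟩
    exact hprd.coprime_mul_left.coprime_dvd_left (dvd_pow_self r two_ne_zero)
  have hmod : p * r ^ 2 ≡ -3 [ZMOD d] := by
    have heq : (4 * n * d : ℤ) = p * r ^ 2 + 3 := by exact_mod_cast h
    exact (Int.modEq_iff_dvd.mpr ⟨4 * n, by linear_combination -heq⟩).symm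
  refine ZMod.isSquare_of_jacobiSym_eq_one ?_
  calc J(-d | p) = J(d | p) := by
        rw [← neg_one_mul, jacobiSym.mul_left, jacobiSym.at_neg_one (Nat.odd_iff.mpr (by lia)),
          ZMod.χ₄_nat_one_mod_four hp4, one_mul]
    _ = J(p | d) :=
        jacobiSym.quadratic_reciprocity_one_mod_four' (Nat.odd_iff.mpr (by lia)) hp4
    _ = J(p * r ^ 2 | d) := by rw [jacobiSym.mul_left, jacobiSym.sq_one' hrd, mul_one]
    _ = J(-3 | d) := jacobiSym.mod_left' hmod
    _ = 1 := jacobiSym_neg_three_eq_one hd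

end Reciprocity

/-! ### Numbers represented by `x² + y² + yz + z²` -/

namespace TernaryForm

theorem mem_values_sqAddEisenstein {n : ℤ} :
    n ∈ sqAddEisenstein.values ↔ ∃ x y z : ℤ, n = x ^ 2 + (y ^ 2 + y * z + z ^ 2) := by
  have heval (x y z : ℤ) : sqAddEisenstein.eval x y z = x ^ 2 + (y ^ 2 + y * z + z ^ 2) := by
    simp only [eval, sqAddEisenstein]
    ring
  simp only [values, heval, Set.mem_ofPred_eq, eq_comm]

theorem mem_values_sqAddEisenstein_of_prime {p d n r : ℕ} (hp : p.Prime) (hd : d % 6 = 1)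
    (h : 4 * n * d = p * r ^ 2 + 3) : (n : ℤ) ∈ sqAddEisenstein.values := by
  have hdisc : (4 * n * d - p * r ^ 2 : ℤ) = 3 := by
    have : (4 * n * d : ℤ) = p * r ^ 2 + 3 := by exact_mod_cast h
    linarith
  obtain ⟨F, hF, hD, hn⟩ := exists_posDef_of_isSquare_neg (n := n) (r := r) hp.pos (by lia)
    (isSquare_neg_of_four_mul_eq hp hd h) (by lia)
  exact (hF.equivalent_sqAddEisenstein (hD.trans hdisc)).values_subset hn

theorem mem_values_sqAddEisenstein_of_not_three_dvd {n : ℤ} (hn : 0 ≤ n) (h3 : ¬ 3 ∣ n) :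
    n ∈ sqAddEisenstein.values := by
  lift n to ℕ using hn
  obtain ⟨m, rfl⟩ : ∃ m, n = m + 1 := ⟨n - 1, by lia⟩
  -- With `r = 1` and `d = 6k + 1`, the equation `4nd = pr² + 3` reads `p = 4m + 1 + 24(m + 1)k`.
  have hcop : (4 * m + 1).Coprime (24 * (m + 1)) := by
    have h8 : (4 * m + 1).Coprime 8 :=
      Nat.Coprime.pow_right 3 (Nat.coprime_two_right.mpr ⟨2 * m, by ring⟩)
    have hthree : (4 * m + 1).Coprime 3 := by
      rw [Nat.coprime_comm, Nat.prime_three.coprime_iff_not_dvd]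
      lia
    have hsucc : (4 * m + 1).Coprime (m + 1) := by
      refine coprime_of_dvd_add (k := 3) ?_ ⟨4, by ring⟩
      rw [Nat.coprime_comm, Nat.prime_three.coprime_iff_not_dvd]
      lia
    exact (h8.mul_right hthree).mul_right hsucc
  obtain ⟨p, k, hp, hpk⟩ := exists_prime_eq_add_mul (by lia) hcop
  refine mem_values_sqAddEisenstein_of_prime (d := 6 * k + 1) (r := 1) hp (by lia) ?_
  rw [hpk]
  ring

theorem mem_values_sqAddEisenstein_of_emod_nine_eq_three {n : ℤ} (hn : 0 ≤ n) (h3 : n % 9 = 3) :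
    n ∈ sqAddEisenstein.values := by
  lift n to ℕ using hn
  obtain ⟨j, rfl⟩ : ∃ j, n = 3 * (3 * j + 1) := ⟨n / 9, by lia⟩
  -- With `r = 3` and `d = 6k + 1`, the equation `4nd = pr² + 3` reads `p = 4j + 1 + 8(3j + 1)k`.
  have hcop : (4 * j + 1).Coprime (8 * (3 * j + 1)) := by
    have h8 : (4 * j + 1).Coprime 8 :=
      Nat.Coprime.pow_right 3 (Nat.coprime_two_right.mpr ⟨2 * j, by ring⟩)
    have hm : (4 * j + 1).Coprime (3 * j + 1) := by
      rw [← Nat.isCoprime_iff_coprime]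
      exact ⟨-3, 4, by push_cast; ring⟩
    exact h8.mul_right hm
  obtain ⟨p, k, hp, hpk⟩ := exists_prime_eq_add_mul (by lia) hcop
  refine mem_values_sqAddEisenstein_of_prime (d := 6 * k + 1) (r := 3) hp (by lia) ?_
  rw [hpk]
  ring

theorem notMem_values_sqAddEisenstein_of_emod_nine_eq_six {n : ℤ} (h6 : n % 9 = 6) :
    n ∉ sqAddEisenstein.values := by
  rw [mem_values_sqAddEisenstein]
  rintro ⟨x, y, z, rfl⟩
  have hmod : ∀ x y z : ZMod 9, x ^ 2 + (y ^ 2 + y * z + z ^ 2) ≠ 6 := by decide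
  refine hmod x y z ?_
  have hcast : ((x ^ 2 + (y ^ 2 + y * z + z ^ 2) : ℤ) : ZMod 9) = (6 : ℤ) :=
    (ZMod.intCast_eq_intCast_iff _ _ 9).mpr h6
  exact_mod_cast hcast

theorem sq_mul_mem_values {F : TernaryForm} {n : ℤ} (k : ℤ) (h : n ∈ F.values) :
    k ^ 2 * n ∈ F.values := by
  obtain ⟨x, y, z, rfl⟩ := h
  exact ⟨k * x, k * y, k * z, by simp only [eval]; ring⟩

end TernaryForm

/-! ### The quaternary forms -/

open TernaryForm

/-- The set of integers represented by `x² + b y² + (z² + zw + w²)`. -/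
def quaternaryValues (b : ℕ) : Set ℤ :=
  {n | ∃ x y z w : ℤ, n = x ^ 2 + b * y ^ 2 + (z ^ 2 + z * w + w ^ 2)}

theorem mem_quaternaryValues_of_sub_mem {b : ℕ} {n : ℤ} (y : ℤ)
    (h : n - b * y ^ 2 ∈ sqAddEisenstein.values) : n ∈ quaternaryValues b := by
  obtain ⟨x, z, w, h⟩ := mem_values_sqAddEisenstein.mp h
  exact ⟨x, y, z, w, by linarith⟩

theorem values_sqAddEisenstein_subset_quaternaryValues (b : ℕ) :
    sqAddEisenstein.values ⊆ quaternaryValues b :=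
  fun _ h ↦ mem_quaternaryValues_of_sub_mem 0 (by simpa using h)

theorem sq_mul_mem_quaternaryValues {b : ℕ} {n : ℤ} (k : ℤ) (h : n ∈ quaternaryValues b) :
    k ^ 2 * n ∈ quaternaryValues b := by
  obtain ⟨x, y, z, w, rfl⟩ := h
  exact ⟨k * x, k * y, k * z, k * w, by ring⟩

theorem three_mul_mem_quaternaryValues_three {n : ℤ} (h : n ∈ quaternaryValues 3) :
    3 * n ∈ quaternaryValues 3 := by
  obtain ⟨x, y, z, w, rfl⟩ := h
  -- With `ζ = exp (πi/3)`, `z² + zw + w²` is the norm of `z + wζ`, and `1 + ζ` has norm `3`.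
  exact ⟨3 * y, x, z - w, z + 2 * w, by push_cast; ring⟩

theorem le_of_mem_quaternaryValues {b : ℕ} {n : ℤ} (hT : n ∉ sqAddEisenstein.values)
    (hn : n ∈ quaternaryValues b) : b ≤ n := by
  obtain ⟨x, y, z, w, rfl⟩ := hn
  have hy : y ≠ 0 := by
    rintro rfl
    exact hT (mem_values_sqAddEisenstein.mpr ⟨x, z, w, by ring⟩)
  have hby : (b : ℤ) ≤ b * y ^ 2 :=
    le_mul_of_one_le_right (by positivity) (Int.add_one_le_iff.mpr (sq_pos_of_ne_zero hy))
  have hnorm : 0 ≤ z ^ 2 + z * w + w ^ 2 := by nlinarith [sq_nonneg (z + w)]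
  linarith [sq_nonneg x]

theorem mem_quaternaryValues_of_not_three_dvd (b : ℕ) {n : ℕ} (hn : ¬ 3 ∣ n) :
    (n : ℤ) ∈ quaternaryValues b :=
  values_sqAddEisenstein_subset_quaternaryValues b
    (mem_values_sqAddEisenstein_of_not_three_dvd (by lia) (by lia))

theorem mem_quaternaryValues_of_le {b n : ℕ} (hb : ¬ 3 ∣ b) (hbn : b ≤ n) :
    (n : ℤ) ∈ quaternaryValues b := by
  by_cases hn : 3 ∣ n
  · refine mem_quaternaryValues_of_sub_mem 1 ?_
    exact mem_values_sqAddEisenstein_of_not_three_dvd (by lia) (by lia)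
  · exact mem_quaternaryValues_of_not_three_dvd b hn

theorem mem_quaternaryValues_of_le_five {b : ℕ} (hb : ¬ 3 ∣ b) (hb5 : b ≤ 5) (n : ℕ) :
    (n : ℤ) ∈ quaternaryValues b := by
  obtain hbn | rfl | rfl | hn : b ≤ n ∨ n = 0 ∨ n = 3 ∨ ¬ 3 ∣ n := by lia
  · exact mem_quaternaryValues_of_le hb hbn
  · exact ⟨0, 0, 0, 0, by norm_num⟩
  · exact ⟨0, 0, 1, 1, by norm_num⟩
  · exact mem_quaternaryValues_of_not_three_dvd b hn

theorem mem_quaternaryValues_three (n : ℕ) : (n : ℤ) ∈ quaternaryValues 3 := by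
  induction n using Nat.strong_induction_on with
  | _ n ih =>
    obtain rfl | hpos := n.eq_zero_or_pos
    · exact ⟨0, 0, 0, 0, by norm_num⟩
    by_cases h3 : 3 ∣ n
    · obtain ⟨m, rfl⟩ := h3
      exact_mod_cast three_mul_mem_quaternaryValues_three (ih m (by lia))
    · exact mem_quaternaryValues_of_not_three_dvd 3 h3

theorem nine_mul_add_six_mem_quaternaryValues_six (l : ℕ) :
    (9 * l + 6 : ℤ) ∈ quaternaryValues 6 := by
  obtain rfl | h3 | ⟨hl, h2⟩ : l = 0 ∨ ¬ 3 ∣ l ∨ 3 ∣ l ∧ 2 ≤ l := by lia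
  · exact ⟨0, 1, 0, 0, by norm_num⟩
  · have hT := mem_values_sqAddEisenstein_of_not_three_dvd (n := l) (by lia) (by lia)
    refine mem_quaternaryValues_of_sub_mem 1 ?_
    convert sq_mul_mem_values 3 hT using 1
    push_cast
    ring
  · have hT := mem_values_sqAddEisenstein_of_not_three_dvd (n := l - 2) (by lia) (by lia)
    refine mem_quaternaryValues_of_sub_mem 2 ?_
    convert sq_mul_mem_values 3 hT using 1
    push_cast
    ring

theorem mem_quaternaryValues_six (n : ℕ) : (n : ℤ) ∈ quaternaryValues 6 := by
  induction n using Nat.strong_induction_on with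
  | _ n ih =>
    obtain rfl | hpos := n.eq_zero_or_pos
    · exact ⟨0, 0, 0, 0, by norm_num⟩
    obtain h3 | h3 | ⟨l, rfl | rfl⟩ :
        ¬ 3 ∣ n ∨ n % 9 = 3 ∨ ∃ l, n = 9 * l ∨ n = 9 * l + 6 := by
      by_cases h3 : 3 ∣ n ∧ n % 9 ≠ 3
      · exact Or.inr (Or.inr ⟨n / 9, by lia⟩)
      · lia
    · exact mem_quaternaryValues_of_not_three_dvd 6 h3
    · refine values_sqAddEisenstein_subset_quaternaryValues 6 ?_
      exact mem_values_sqAddEisenstein_of_emod_nine_eq_three (by lia) (by lia)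
    · exact_mod_cast sq_mul_mem_quaternaryValues 3 (ih l (by lia))
    · exact_mod_cast nine_mul_add_six_mem_quaternaryValues_six l

theorem stmt_4 (b : ℕ) (hb : 0 < b) :
    (∀ n : ℕ, ∃ x y z w : ℤ,
      (n : ℤ) = x ^ 2 + b * y ^ 2 + (z ^ 2 + z * w + w ^ 2)) ↔
    b ∈ ({1, 2, 3, 4, 5, 6} : Set ℕ) := by
  change (∀ n : ℕ, (n : ℤ) ∈ quaternaryValues b) ↔ _
  constructor
  · intro huniv
    have hT : ((6 : ℕ) : ℤ) ∉ sqAddEisenstein.values :=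
      notMem_values_sqAddEisenstein_of_emod_nine_eq_six (by norm_num)
    have hb6 : b ≤ 6 := by exact_mod_cast le_of_mem_quaternaryValues hT (huniv 6)
    simp only [Set.mem_insert_iff, Set.mem_singleton_iff]
    lia
  · rintro (rfl | rfl | rfl | rfl | rfl | rfl) n
    · exact mem_quaternaryValues_of_le_five (by norm_num) (by norm_num) n
    · exact mem_quaternaryValues_of_le_five (by norm_num) (by norm_num) n
    · exact mem_quaternaryValues_three n
    · exact mem_quaternaryValues_of_le_five (by norm_num) (by norm_num) n
    · exact mem_quaternaryValues_of_le_five (by norm_num) (by norm_num) n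
    · exact mem_quaternaryValues_six n
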